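/- Let G=(V,E) be a graph, let S ⊆ V, let 𝒯 be a slim S-nice tree decomposition of G of width k, and let T' be a full join tree of 𝒯 whose nodes all have the common bag X. Then every vertex v ∈ X ∖ S has neighbors in at least three pairwise distinct connected components of G − X, each of which contains a vertex of S. -/

import Mathlib

/-! Preliminary definitions: rooted tree decompositions, `S`-traces, `S`-nice and
slim tree decompositions, following Chapelle et al. -/

/-- A walk in `G` all of whose vertices lie in the set `W`. -/
def SimpleGraph.ReachableIn {V : Type} (G : SimpleGraph V) (W : Set V) (u v : V) : Prop :=
  ∃ p : G.Walk u v, ∀ x ∈ p.support, x ∈ W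

/-- The open neighborhood of a set of vertices. -/
def SimpleGraph.nbhdSet {V : Type} (G : SimpleGraph V) (W : Set V) : Set V :=
  {x | x ∉ W ∧ ∃ w ∈ W, G.Adj w x}

/-- The vertex set of the connected component of `G − X` that contains `v`
(assuming `v ∉ X`). -/
def SimpleGraph.compOutside {V : Type} (G : SimpleGraph V) (X : Set V) (v : V) : Set V :=
  {w | G.ReachableIn Xᶜ v w}

/-- A rooted tree decomposition of a graph `G` on vertex type `V`, with node type `ι`.
The rooted tree is given by a parent function: the root is a fixed point of `parent`
and every node reaches the root by iterating `parent`.  The bags satisfy the three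
usual conditions of a tree decomposition; connectedness of `{t | v ∈ bag t}` is
expressed by the existence of a highest node `m` containing `v` such that from any
node whose bag contains `v` the whole ancestor chain up to `m` contains `v`. -/
structure RootedTreeDecomp (V ι : Type) (G : SimpleGraph V) where
  root : ι
  parent : ι → ι
  parent_root : parent root = root
  reaches_root : ∀ t : ι, ∃ n : ℕ, parent^[n] t = root
  bag : ι → Set V
  bags_cover : ∀ v : V, ∃ t : ι, v ∈ bag t
  bags_of_edges : ∀ ⦃u v : V⦄, G.Adj u v → ∃ t : ι, u ∈ bag t ∧ v ∈ bag t
  bags_connected : ∀ v : V, ∃ m : ι, v ∈ bag m ∧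
    ∀ t : ι, v ∈ bag t → ∃ n : ℕ, parent^[n] t = m ∧ ∀ i ≤ n, v ∈ bag (parent^[i] t)

namespace RootedTreeDecomp

variable {V ι : Type} {G : SimpleGraph V}

/-- `t'` lies in the subtree `T_t` rooted at `t`; equivalently, `t` is an
ancestor (possibly equal) of `t'`. -/
def InSubtree (𝒯 : RootedTreeDecomp V ι G) (t t' : ι) : Prop :=
  ∃ n : ℕ, 𝒯.parent^[n] t' = t

/-- `t` is the parent of `t'`. -/
def IsParent (𝒯 : RootedTreeDecomp V ι G) (t t' : ι) : Prop :=
  t' ≠ 𝒯.root ∧ 𝒯.parent t' = t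

/-- `V_t`: the union of the bags of the nodes of the subtree rooted at `t`. -/
def Vt (𝒯 : RootedTreeDecomp V ι G) (t : ι) : Set V :=
  {v | ∃ t', 𝒯.InSubtree t t' ∧ v ∈ 𝒯.bag t'}

/-- `L_t = V_t ∖ X_t`. -/
def Lt (𝒯 : RootedTreeDecomp V ι G) (t : ι) : Set V := 𝒯.Vt t \ 𝒯.bag t

/-- `R_t = V ∖ V_t`. -/
def Rt (𝒯 : RootedTreeDecomp V ι G) (t : ι) : Set V := (𝒯.Vt t)ᶜ

/-- `L_t^S = L_t ∩ S`. -/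
def LS (𝒯 : RootedTreeDecomp V ι G) (S : Set V) (t : ι) : Set V := 𝒯.Lt t ∩ S

/-- `X_t^S = X_t ∩ S`. -/
def XS (𝒯 : RootedTreeDecomp V ι G) (S : Set V) (t : ι) : Set V := 𝒯.bag t ∩ S

/-- `R_t^S = R_t ∩ S`. -/
def RS (𝒯 : RootedTreeDecomp V ι G) (S : Set V) (t : ι) : Set V := 𝒯.Rt t ∩ S

/-- The `S`-trace of a node `t`. -/
def STrace (𝒯 : RootedTreeDecomp V ι G) (S : Set V) (t : ι) : Set V × Set V × Set V :=
  (𝒯.LS S t, 𝒯.XS S t, 𝒯.RS S t)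

/-- Every bag has size at most `k + 1`, i.e. the width is at most `k`. -/
def WidthAtMost (𝒯 : RootedTreeDecomp V ι G) (k : ℕ) : Prop :=
  ∀ t : ι, (𝒯.bag t).ncard ≤ k + 1

/-- The width of the decomposition (max bag size minus one) is exactly `k`. -/
def HasWidth (𝒯 : RootedTreeDecomp V ι G) (k : ℕ) : Prop :=
  𝒯.WidthAtMost k ∧ ∃ t : ι, (𝒯.bag t).ncard = k + 1

/-- `t'` is an `S`-child of `t`. -/
def IsSChild (𝒯 : RootedTreeDecomp V ι G) (S : Set V) (t t' : ι) : Prop :=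
  𝒯.IsParent t t' ∧ ((𝒯.LS S t' ∪ 𝒯.XS S t') \ (𝒯.RS S t ∪ 𝒯.XS S t)).Nonempty

/-- `t` is an `S`-bottom node: `L_t^S ≠ ∅` and `t` is the bottom node of the
directed path of its own `S`-trace (every node with the same `S`-trace is an
ancestor of `t`). -/
def IsSBottom (𝒯 : RootedTreeDecomp V ι G) (S : Set V) (t : ι) : Prop :=
  (𝒯.LS S t).Nonempty ∧ ∀ t', 𝒯.STrace S t' = 𝒯.STrace S t → 𝒯.InSubtree t' t

/-- `t` admits the `S`-operation `introduce(v)`. -/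
def AdmitsIntroduce (𝒯 : RootedTreeDecomp V ι G) (S : Set V) (t : ι) (v : V) : Prop :=
  ∃ t₁, 𝒯.IsSChild S t t₁ ∧ (∀ t₂, 𝒯.IsSChild S t t₂ → t₂ = t₁) ∧
    v ∈ S ∧ v ∉ 𝒯.bag t₁ ∧ 𝒯.XS S t = 𝒯.XS S t₁ ∪ {v}

/-- `t` admits the `S`-operation `forget(v)`. -/
def AdmitsForget (𝒯 : RootedTreeDecomp V ι G) (S : Set V) (t : ι) (v : V) : Prop :=
  ∃ t₁, 𝒯.IsSChild S t t₁ ∧ (∀ t₂, 𝒯.IsSChild S t t₂ → t₂ = t₁) ∧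
    v ∈ S ∧ v ∈ 𝒯.bag t₁ ∧ 𝒯.XS S t = 𝒯.XS S t₁ \ {v}

/-- `t` admits the `S`-operation `join` with the two `S`-children `t₁, t₂`. -/
def AdmitsJoin (𝒯 : RootedTreeDecomp V ι G) (S : Set V) (t t₁ t₂ : ι) : Prop :=
  t₁ ≠ t₂ ∧ 𝒯.IsSChild S t t₁ ∧ 𝒯.IsSChild S t t₂ ∧
    (∀ t₃, 𝒯.IsSChild S t t₃ → t₃ = t₁ ∨ t₃ = t₂) ∧
    𝒯.XS S t₁ ∪ 𝒯.XS S t₂ ⊆ 𝒯.XS S t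

/-- `S`-nice tree decomposition: bags along tree edges are comparable and differ in
size by at most one, and every `S`-bottom node admits one of the `S`-operations. -/
def IsSNice (𝒯 : RootedTreeDecomp V ι G) (S : Set V) : Prop :=
  (∀ t t' : ι, 𝒯.IsParent t' t →
      (𝒯.bag t ⊆ 𝒯.bag t' ∨ 𝒯.bag t' ⊆ 𝒯.bag t) ∧
      (𝒯.bag t).ncard ≤ (𝒯.bag t').ncard + 1 ∧ (𝒯.bag t').ncard ≤ (𝒯.bag t).ncard + 1) ∧
  ∀ t : ι, 𝒯.IsSBottom S t →
    (∃ v, 𝒯.AdmitsIntroduce S t v) ∨ (∃ v, 𝒯.AdmitsForget S t v) ∨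
      (∃ t₁ t₂, 𝒯.AdmitsJoin S t t₁ t₂)

/-- Nice tree decomposition: root and leaves have empty bags, and every internal
node is an introduce, forget, or join node. -/
def IsNice (𝒯 : RootedTreeDecomp V ι G) : Prop :=
  𝒯.bag 𝒯.root = ∅ ∧
  (∀ t : ι, (∀ t', ¬𝒯.IsParent t t') → 𝒯.bag t = ∅) ∧
  ∀ t : ι, (∃ t', 𝒯.IsParent t t') →
    (∃ t', 𝒯.IsParent t t' ∧ (∀ t'', 𝒯.IsParent t t'' → t'' = t') ∧
      ((∃ v, v ∉ 𝒯.bag t' ∧ 𝒯.bag t = 𝒯.bag t' ∪ {v}) ∨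
        (∃ v, v ∈ 𝒯.bag t' ∧ 𝒯.bag t = 𝒯.bag t' \ {v}))) ∨
    (∃ t₁ t₂, t₁ ≠ t₂ ∧ 𝒯.IsParent t t₁ ∧ 𝒯.IsParent t t₂ ∧
      (∀ t₃, 𝒯.IsParent t t₃ → t₃ = t₁ ∨ t₃ = t₂) ∧
      𝒯.bag t = 𝒯.bag t₁ ∧ 𝒯.bag t = 𝒯.bag t₂)

/-- A set of nodes inducing a connected subtree of the tree: it contains a node `m`
such that from every node of the set the whole ancestor chain up to `m` stays in
the set. -/
def ConnectedNodeSet (𝒯 : RootedTreeDecomp V ι G) (A : Set ι) : Prop :=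
  ∃ m ∈ A, ∀ t ∈ A, ∃ n : ℕ, 𝒯.parent^[n] t = m ∧ ∀ i ≤ n, 𝒯.parent^[i] t ∈ A

/-- A full join tree: a non-trivial inclusion-maximal connected set of nodes all of
which share one and the same full bag `X` (of size `k + 1`). -/
def IsFullJoinTree (𝒯 : RootedTreeDecomp V ι G) (k : ℕ) (A : Set ι) (X : Set V) : Prop :=
  A.Nontrivial ∧ 𝒯.ConnectedNodeSet A ∧ X.ncard = k + 1 ∧ (∀ t ∈ A, 𝒯.bag t = X) ∧
  ∀ A' : Set ι, A ⊆ A' → 𝒯.ConnectedNodeSet A' → (∀ t ∈ A', 𝒯.bag t = X) → A' = A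

/-- `m` is the root (top node) of the node set `A`. -/
def IsTopOf (𝒯 : RootedTreeDecomp V ι G) (A : Set ι) (m : ι) : Prop :=
  m ∈ A ∧ ∀ t ∈ A, 𝒯.InSubtree m t

/-- The condition on a pair `(u, ti)` appearing in condition (7) of slimness:
either `ti` belongs to `T'_C` (it is an `S`-child of a node of the full join tree
`A` but is not itself in `A`) and `u ∈ V_{ti}`, or `ti` is the parent of the root
`tr` of the full join tree and `u ∈ V ∖ V_{tr}`. -/
def FullJoinBranch (𝒯 : RootedTreeDecomp V ι G) (S : Set V) (A : Set ι) (tr : ι)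
    (u : V) (ti : ι) : Prop :=
  (ti ∉ A ∧ (∃ ta ∈ A, 𝒯.IsSChild S ta ti) ∧ u ∈ 𝒯.Vt ti) ∨
  (tr ≠ 𝒯.root ∧ ti = 𝒯.parent tr ∧ u ∉ 𝒯.Vt tr)

/-- Slim `S`-nice tree decomposition of width `k` (the seven conditions of the
paper; a bag is *full* if it has size `k + 1`). -/
def IsSlim (𝒯 : RootedTreeDecomp V ι G) (S : Set V) (k : ℕ) : Prop :=
  -- (1) the root is not an S-bottom node
  (¬𝒯.IsSBottom S 𝒯.root) ∧
  -- (2) S-bottom nodes with two S-children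
  (∀ t t₁ t₂ : ι, 𝒯.IsSBottom S t → t₁ ≠ t₂ → 𝒯.IsSChild S t t₁ → 𝒯.IsSChild S t t₂ →
    (∃ A X, 𝒯.IsFullJoinTree k A X ∧ t ∈ A) ∨
      ((𝒯.bag t₁).ncard ≠ k + 1 ∧ (𝒯.bag t₂).ncard ≠ k + 1 ∧
        (𝒯.bag t₁).ncard ≤ (𝒯.bag t).ncard ∧ (𝒯.bag t₂).ncard ≤ (𝒯.bag t).ncard ∧
        ∀ tp, 𝒯.IsParent tp t →
          (𝒯.bag tp).ncard ≠ k + 1 ∧ (𝒯.bag tp).ncard ≤ (𝒯.bag t).ncard)) ∧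
  -- (3) S-bottom nodes with a non-full bag
  (∀ t tp : ι, 𝒯.IsSBottom S t → (𝒯.bag t).ncard ≠ k + 1 → 𝒯.IsParent tp t →
    𝒯.bag t = 𝒯.bag tp ∧ ∀ t'', 𝒯.IsSChild S tp t'' → t'' = t) ∧
  -- (4) S-bottom nodes admitting forget(v)
  (∀ t v t', 𝒯.IsSBottom S t → 𝒯.AdmitsForget S t v → 𝒯.IsSChild S t t' →
    (𝒯.bag t').ncard ≠ k + 1 →
    (∀ t₁ t₂, 𝒯.IsSChild S t' t₁ → 𝒯.IsSChild S t' t₂ → t₁ = t₂) ∧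
      ∀ t'', 𝒯.IsSChild S t' t'' → 𝒯.bag t' = 𝒯.bag t'') ∧
  -- (5) parents of S-bottom nodes with non-full bags
  (∀ t tp, 𝒯.IsSBottom S t → 𝒯.IsParent tp t → (𝒯.bag tp).ncard ≠ k + 1 →
    tp = 𝒯.root ∨ ∀ tpp, 𝒯.IsParent tpp tp → ¬𝒯.IsSBottom S tpp) ∧
  -- (6) nodes of full join trees
  (∀ A X, 𝒯.IsFullJoinTree k A X → ∀ t ∈ A,
    𝒯.IsSBottom S t ∧ ∃ t₁ t₂, t₁ ≠ t₂ ∧ 𝒯.IsSChild S t t₁ ∧ 𝒯.IsSChild S t t₂) ∧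
  -- (7) branching condition of full join trees
  (∀ A X tr, 𝒯.IsFullJoinTree k A X → 𝒯.IsTopOf A tr →
    ∀ v ∈ X \ S, ∃ u₁ u₂ u₃ : V, ∃ t₁ t₂ t₃ : ι,
      u₁ ≠ u₂ ∧ u₁ ≠ u₃ ∧ u₂ ≠ u₃ ∧ t₁ ≠ t₂ ∧ t₁ ≠ t₃ ∧ t₂ ≠ t₃ ∧
      (G.Adj v u₁ ∧ u₁ ∉ X ∧ (∃ s ∈ S, G.ReachableIn Xᶜ u₁ s) ∧
        𝒯.FullJoinBranch S A tr u₁ t₁) ∧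
      (G.Adj v u₂ ∧ u₂ ∉ X ∧ (∃ s ∈ S, G.ReachableIn Xᶜ u₂ s) ∧
        𝒯.FullJoinBranch S A tr u₂ t₂) ∧
      (G.Adj v u₃ ∧ u₃ ∉ X ∧ (∃ s ∈ S, G.ReachableIn Xᶜ u₃ s) ∧
        𝒯.FullJoinBranch S A tr u₃ t₃))

end RootedTreeDecomp

/-- `tw(G) ≤ k`: `G` admits a (rooted) tree decomposition of width at most `k`. -/
def SimpleGraph.TreewidthAtMost {V : Type} (G : SimpleGraph V) (k : ℕ) : Prop :=
  ∃ (ι : Type) (𝒯 : RootedTreeDecomp V ι G), 𝒯.WidthAtMost k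

/-!
For a node `c`, the vertices lying in bags both inside and outside the subtree at `c` all belong to
the adhesion set `X_c ∩ X_{parent c}`, so an edge can leave `V_c` only from a vertex of this set. In
a full join tree with common bag `X`, every branch (the subtree at a child hanging off the join
tree, or everything outside the subtree at its top node) is cut off by an adhesion set contained in
`X`; hence each branch is, outside `X`, a union of components of `G − X`. Two different branches
share only vertices of `X`, so the three neighbors that condition (7) of slimness places in three
different branches lie in three different components.
-/

namespace RootedTreeDecomp

variable {V ι : Type} {G : SimpleGraph V} {𝒯 : RootedTreeDecomp V ι G}
  {S X : Set V} {A : Set ι} {a b c m s t : ι} {u v w : V}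

theorem InSubtree.trans (hab : 𝒯.InSubtree a b) (hbc : 𝒯.InSubtree b c) : 𝒯.InSubtree a c := by
  obtain ⟨n, rfl⟩ := hab
  obtain ⟨m, rfl⟩ := hbc
  exact ⟨n + m, Function.iterate_add_apply ..⟩

theorem inSubtree_parent (𝒯 : RootedTreeDecomp V ι G) (t : ι) : 𝒯.InSubtree (𝒯.parent t) t :=
  ⟨1, rfl⟩

theorem inSubtree_iterate_of_le (𝒯 : RootedTreeDecomp V ι G) (t : ι) {j n : ℕ} (h : j ≤ n) :
    𝒯.InSubtree (𝒯.parent^[n] t) (𝒯.parent^[j] t) :=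
  ⟨n - j, by rw [← Function.iterate_add_apply, Nat.sub_add_cancel h]⟩

theorem InSubtree.eq_or_inSubtree_parent (h : 𝒯.InSubtree a b) :
    a = b ∨ 𝒯.InSubtree a (𝒯.parent b) := by
  obtain ⟨n, rfl⟩ := h
  cases n with
  | zero => exact .inl rfl
  | succ n => exact .inr ⟨n, rfl⟩

theorem InSubtree.total (ha : 𝒯.InSubtree a s) (hb : 𝒯.InSubtree b s) :
    𝒯.InSubtree a b ∨ 𝒯.InSubtree b a := by
  obtain ⟨n, rfl⟩ := ha
  obtain ⟨m, rfl⟩ := hb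
  exact (le_total m n).imp (𝒯.inSubtree_iterate_of_le s) (𝒯.inSubtree_iterate_of_le s)

theorem eq_root_of_isPeriodicPt {p : ℕ} (hp : 0 < p)
    (h : Function.IsPeriodicPt 𝒯.parent p t) : t = 𝒯.root := by
  obtain ⟨n, hn⟩ := 𝒯.reaches_root t
  have hle : n ≤ n * p := Nat.le_mul_of_pos_right n hp
  calc
    t = 𝒯.parent^[n * p] t := (h.const_mul n).symm
    _ = 𝒯.parent^[n * p - n] 𝒯.root := by
      rw [← hn, ← Function.iterate_add_apply, Nat.sub_add_cancel hle]
    _ = 𝒯.root := Function.iterate_fixed 𝒯.parent_root _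

theorem InSubtree.antisymm (hab : 𝒯.InSubtree a b) (hba : 𝒯.InSubtree b a) : a = b := by
  obtain ⟨n, rfl⟩ := hab
  obtain ⟨m, hm⟩ := hba
  rcases n.eq_zero_or_pos with rfl | hn
  · rfl
  · have hb : b = 𝒯.root := eq_root_of_isPeriodicPt (p := m + n) (by lia)
      ((Function.iterate_add_apply ..).trans hm)
    rw [hb, Function.iterate_fixed 𝒯.parent_root]

theorem ConnectedNodeSet.exists_isTopOf (hA : 𝒯.ConnectedNodeSet A) : ∃ m, 𝒯.IsTopOf A m := by
  obtain ⟨m, hm, hchain⟩ := hA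
  exact ⟨m, hm, fun t ht => (hchain t ht).imp fun _ h => h.1⟩

theorem ConnectedNodeSet.mem_of_inSubtree (hA : 𝒯.ConnectedNodeSet A) (ha : a ∈ A) (hb : b ∈ A)
    (hat : 𝒯.InSubtree a t) (htb : 𝒯.InSubtree t b) : t ∈ A := by
  obtain ⟨m, hmA, hchain⟩ := hA
  obtain ⟨n, hn, hmem⟩ := hchain b hb
  obtain ⟨j, rfl⟩ := htb
  rcases le_total j n with hjn | hnj
  · exact hmem j hjn
  · have hma : 𝒯.InSubtree m a := (hchain a ha).imp fun _ h => h.1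
    have htm : 𝒯.InSubtree (𝒯.parent^[j] b) m :=
      hn ▸ 𝒯.inSubtree_iterate_of_le b hnj
    rwa [htm.antisymm (hma.trans hat)]

theorem ConnectedNodeSet.eq_of_inSubtree_of_parent_mem (hA : 𝒯.ConnectedNodeSet A) (ha : a ∉ A)
    (hpa : 𝒯.parent a ∈ A) (hpb : 𝒯.parent b ∈ A) (hab : 𝒯.InSubtree a b) : a = b :=
  hab.eq_or_inSubtree_parent.resolve_right fun h =>
    ha (hA.mem_of_inSubtree hpa hpb (𝒯.inSubtree_parent a) h)

theorem InSubtree.Vt_subset (h : 𝒯.InSubtree a b) : 𝒯.Vt b ⊆ 𝒯.Vt a :=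
  fun _ ⟨s, hs, hv⟩ => ⟨s, h.trans hs, hv⟩

/-- The adhesion set of a node: the vertices its bag shares with the bag of its parent. At the root,
which is its own parent, this is the whole bag. -/
def adhesion (𝒯 : RootedTreeDecomp V ι G) (c : ι) : Set V := 𝒯.bag c ∩ 𝒯.bag (𝒯.parent c)

theorem mem_adhesion_of_mem_Vt_of_mem_bag (hv : v ∈ 𝒯.Vt c) (hvt : v ∈ 𝒯.bag t)
    (hct : ¬𝒯.InSubtree c t) : v ∈ 𝒯.adhesion c := by
  obtain ⟨s, ⟨j, rfl⟩, hvs⟩ := hv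
  obtain ⟨m, -, htop⟩ := 𝒯.bags_connected v
  obtain ⟨n, hn, hmem⟩ := htop s hvs
  have hmt : 𝒯.InSubtree m t := (htop t hvt).imp fun _ h => h.1
  have hjn : j < n := by
    by_contra! hnj
    have hcm : 𝒯.InSubtree (𝒯.parent^[j] s) m :=
      hn ▸ 𝒯.inSubtree_iterate_of_le s hnj
    exact hct (hcm.trans hmt)
  exact ⟨hmem j hjn.le, Function.iterate_succ_apply' 𝒯.parent j s ▸ hmem (j + 1) hjn⟩

theorem Vt_inter_Vt_subset_adhesion (hab : ¬𝒯.InSubtree a b) (hba : ¬𝒯.InSubtree b a) :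
    𝒯.Vt a ∩ 𝒯.Vt b ⊆ 𝒯.adhesion a := by
  rintro v ⟨hva, s, hbs, hvs⟩
  exact mem_adhesion_of_mem_Vt_of_mem_bag hva hvs fun has => (has.total hbs).elim hab hba

theorem mem_Vt_of_adj (huv : G.Adj u v) (hu : u ∈ 𝒯.Vt c) (hadh : u ∉ 𝒯.adhesion c) :
    v ∈ 𝒯.Vt c := by
  obtain ⟨t, hut, hvt⟩ := 𝒯.bags_of_edges huv
  have hct : 𝒯.InSubtree c t := by
    by_contra hct
    exact hadh (mem_adhesion_of_mem_Vt_of_mem_bag hu hut hct)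
  exact ⟨t, hct, hvt⟩

theorem mem_Vt_iff_of_reachableIn (hX : 𝒯.adhesion c ⊆ X)
    (h : G.ReachableIn Xᶜ u w) : u ∈ 𝒯.Vt c ↔ w ∈ 𝒯.Vt c := by
  obtain ⟨p, hp⟩ := h
  induction p with
  | nil => rfl
  | @cons u v w huv p ih =>
    simp only [SimpleGraph.Walk.support_cons, List.mem_cons, forall_eq_or_imp] at hp
    obtain ⟨hu, hp⟩ := hp
    have hv : v ∈ Xᶜ := hp v p.start_mem_support
    calc
      u ∈ 𝒯.Vt c ↔ v ∈ 𝒯.Vt c :=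
        ⟨fun h => mem_Vt_of_adj huv h fun hadh => hu (hX hadh),
          fun h => mem_Vt_of_adj huv.symm h fun hadh => hv (hX hadh)⟩
      _ ↔ w ∈ 𝒯.Vt c := ih hp

namespace FullJoinBranch

theorem of_reachableIn (hbag : ∀ t ∈ A, 𝒯.bag t = X) (hm : m ∈ A)
    (hu : 𝒯.FullJoinBranch S A m u t) (h : G.ReachableIn Xᶜ u w) :
    𝒯.FullJoinBranch S A m w t := by
  rcases hu with ⟨htA, ⟨_, hp, hchild⟩, hut⟩ | ⟨hroot, rfl, hum⟩
  · obtain rfl := hchild.1.2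
    have hX : 𝒯.adhesion t ⊆ X := hbag _ hp ▸ Set.inter_subset_right
    exact .inl ⟨htA, ⟨_, hp, hchild⟩, (mem_Vt_iff_of_reachableIn hX h).1 hut⟩
  · have hX : 𝒯.adhesion m ⊆ X := hbag _ hm ▸ Set.inter_subset_left
    exact .inr ⟨hroot, rfl, fun hwm => hum ((mem_Vt_iff_of_reachableIn hX h).2 hwm)⟩

theorem eq_of_notMem (hA : 𝒯.ConnectedNodeSet A) (hbag : ∀ t ∈ A, 𝒯.bag t = X)
    (hm : 𝒯.IsTopOf A m) (hu : u ∉ X) (ha : 𝒯.FullJoinBranch S A m u a)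
    (hb : 𝒯.FullJoinBranch S A m u b) : a = b := by
  have below_top {c : ι} (hc : 𝒯.parent c ∈ A) (huc : u ∈ 𝒯.Vt c) : u ∈ 𝒯.Vt m :=
    ((hm.2 _ hc).trans (𝒯.inSubtree_parent c)).Vt_subset huc
  rcases ha with ⟨haA, ⟨_, hpa, ⟨-, rfl⟩, -⟩, hua⟩ | ⟨-, rfl, hum⟩ <;>
    rcases hb with ⟨hbA, ⟨_, hpb, ⟨-, rfl⟩, -⟩, hub⟩ | ⟨-, rfl, hum'⟩
  · by_contra hne
    have hab : ¬𝒯.InSubtree a b := fun h =>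
      hne (hA.eq_of_inSubtree_of_parent_mem haA hpa hpb h)
    have hba : ¬𝒯.InSubtree b a := fun h =>
      hne (hA.eq_of_inSubtree_of_parent_mem hbA hpb hpa h).symm
    exact hu (hbag _ hpa ▸ (Vt_inter_Vt_subset_adhesion hab hba ⟨hua, hub⟩).2)
  · exact absurd (below_top hpa hua) hum'
  · exact absurd (below_top hpb hub) hum
  · rfl

theorem not_reachableIn (hA : 𝒯.ConnectedNodeSet A) (hbag : ∀ t ∈ A, 𝒯.bag t = X)
    (hm : 𝒯.IsTopOf A m) (hne : a ≠ b) (hw : w ∉ X) (hu : 𝒯.FullJoinBranch S A m u a)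
    (hwb : 𝒯.FullJoinBranch S A m w b) : ¬G.ReachableIn Xᶜ u w := fun h =>
  hne (eq_of_notMem hA hbag hm hw (hu.of_reachableIn hbag hm.1 h) hwb)

end FullJoinBranch

end RootedTreeDecomp

theorem statement19_general {V ι : Type} {G : SimpleGraph V} {𝒯 : RootedTreeDecomp V ι G}
    {S : Set V} {k : ℕ} (hslim : 𝒯.IsSlim S k) {A : Set ι} {X : Set V}
    (hfjt : 𝒯.IsFullJoinTree k A X) :
    ∀ v ∈ X \ S, ∃ u₁ u₂ u₃ : V,
      G.Adj v u₁ ∧ G.Adj v u₂ ∧ G.Adj v u₃ ∧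
      u₁ ∉ X ∧ u₂ ∉ X ∧ u₃ ∉ X ∧
      (∃ s ∈ S, G.ReachableIn Xᶜ u₁ s) ∧
      (∃ s ∈ S, G.ReachableIn Xᶜ u₂ s) ∧
      (∃ s ∈ S, G.ReachableIn Xᶜ u₃ s) ∧
      ¬G.ReachableIn Xᶜ u₁ u₂ ∧ ¬G.ReachableIn Xᶜ u₁ u₃ ∧
      ¬G.ReachableIn Xᶜ u₂ u₃ := by
  intro v hv
  have ⟨_, hA, _, hbag, _⟩ := hfjt
  obtain ⟨m, hm⟩ := hA.exists_isTopOf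
  obtain ⟨-, -, -, -, -, -, branching⟩ := hslim
  obtain ⟨u₁, u₂, u₃, t₁, t₂, t₃, -, -, -, h₁₂, h₁₃, h₂₃, ⟨adj₁, hu₁, reach₁, branch₁⟩,
    ⟨adj₂, hu₂, reach₂, branch₂⟩, ⟨adj₃, hu₃, reach₃, branch₃⟩⟩ := branching A X m hfjt hm v hv
  exact ⟨u₁, u₂, u₃, adj₁, adj₂, adj₃, hu₁, hu₂, hu₃, reach₁, reach₂, reach₃,
    branch₁.not_reachableIn hA hbag hm h₁₂ hu₂ branch₂,
    branch₁.not_reachableIn hA hbag hm h₁₃ hu₃ branch₃,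
    branch₂.not_reachableIn hA hbag hm h₂₃ hu₃ branch₃⟩

/-- In a slim `S`-nice tree decomposition of width `k`, if `T'`
is a full join tree whose nodes share the bag `X`, then every `v ∈ X ∖ S` has
neighbors in at least three pairwise distinct connected components of `G − X`,
each containing a vertex of `S`. -/
theorem statement19 {V ι : Type} [Fintype V] [DecidableEq V] {G : SimpleGraph V}
    (𝒯 : RootedTreeDecomp V ι G) (S : Set V) (k : ℕ)
    (hnice : 𝒯.IsSNice S) (hslim : 𝒯.IsSlim S k) (hw : 𝒯.HasWidth k)
    (A : Set ι) (X : Set V) (hfjt : 𝒯.IsFullJoinTree k A X) :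
    ∀ v ∈ X \ S, ∃ u₁ u₂ u₃ : V,
      G.Adj v u₁ ∧ G.Adj v u₂ ∧ G.Adj v u₃ ∧
      u₁ ∉ X ∧ u₂ ∉ X ∧ u₃ ∉ X ∧
      (∃ s ∈ S, G.ReachableIn Xᶜ u₁ s) ∧
      (∃ s ∈ S, G.ReachableIn Xᶜ u₂ s) ∧
      (∃ s ∈ S, G.ReachableIn Xᶜ u₃ s) ∧
      ¬G.ReachableIn Xᶜ u₁ u₂ ∧ ¬G.ReachableIn Xᶜ u₁ u₃ ∧
      ¬G.ReachableIn Xᶜ u₂ u₃ :=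
  statement19_general hslim hfjt
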